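/- Strong W^{2,2}-convergence of the generating arcs of the D₂-symmetric (2,b)-torus knots to the generating arc of tpc[π]: let b ≥ 3 be odd, and for ε ∈ (0, 1/(8(b+1))) set r = r(ε) := (1/4 − (b+1)ε)/π and define α^ε : [0, 1/4] → ℝ³ by α^ε(t) = h^ε(t) := (ε²·(−1)^{(b−1)/2}·sin(π·φ(t/ε)), t, ε²·cos(π·φ(t/ε))) for t ∈ [0, (b+1)ε/2], α^ε(t) = (ε² + r − r·cos((t − (b+1)ε/2)/r), (b+1)ε/2 + r·sin((t − (b+1)ε/2)/r), 0) for t ∈ ((b+1)ε/2, 1/4 − (b+1)ε/2], and α^ε(t) = (ε² + 2r, 1/4 − t, 0) for t ∈ (1/4 − (b+1)ε/2, 1/4], where φ(t) = t on [0,(b−1)/2], φ(t) = b/2 − (1/2)(t−(b+1)/2)² on [(b−1)/2,(b+1)/2], φ(t) = b/2 for t ≥ (b+1)/2. Let α₂(t) = (1/(4π))·(1 − cos(4πt), sin(4πt), 0). Then there exists a constant C ≥ 1, independent of ε, such that for all ε ∈ (0, 1/(8(b+1))): (∫₀^{1/4} ‖(α^ε)''(t) − α₂''(t)‖² dt)^{1/2}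 ≤ C·√ε, (∫₀^{1/4} ‖(α^ε)'(t) − α₂'(t)‖² dt)^{1/2} ≤ C·√ε, and sup_{t ∈ [0,1/4]} ‖α^ε(t) − α₂(t)‖ ≤ C·√ε; in particular α^ε → α₂ in the W^{2,2}-sense as ε → 0. -/

import Mathlib

/-!
Put `δ = (b+1)ε`. On the middle interval of length `1/4 - δ` the arc `α^ε` is a semicircle, and
`α₂` belongs to the same family of semicircles, for `δ = 0`; radius and angle depend on `δ` in a
Lipschitz way, so both derivatives differ there by `O(δ)`. On the two end intervals, of total length
`δ`, it suffices that the derivatives stay bounded: the radius `ε²` of the helical part compensates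
the factor `ε⁻²` produced by differentiating its phase `π φ(t/ε)` twice. The squared `L²`-norms are
therefore `O(δ² + δ)`. In the sup norm the difference is even `O(δ)`, because on each end interval
both arcs remain within `O(δ)` of one endpoint of `α₂`.
-/

noncomputable section

open Real Set

/-- Euclidean three-space. -/
abbrev E3 : Type := EuclideanSpace ℝ (Fin 3)

/-- The vector (a,b,c) ∈ ℝ³ (with the Euclidean norm). -/
def vec3 (a b c : ℝ) : E3 := (WithLp.equiv 2 (Fin 3 → ℝ)).symm ![a, b, c]

/-- The standard basis vectors. -/
def e1 : E3 := vec3 1 0 0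
def e2 : E3 := vec3 0 1 0
def e3 : E3 := vec3 0 0 1

/-- The rotations `R₁, R₂, R₃` by angle π about the coordinate axes `ℝe₁, ℝe₂, ℝe₃`
(indexed by `0, 1, 2 : Fin 3`). -/
def Rot : Fin 3 → E3 → E3 :=
  ![fun x => vec3 (x 0) (-x 1) (-x 2),
    fun x => vec3 (-x 0) (x 1) (-x 2),
    fun x => vec3 (-x 0) (-x 1) (x 2)]

/-- The dihedral parameter transformations `ψ₁^ℓ(t) = ℓ/2 - t`, `ψ₂^ℓ(t) = t - ℓ/2`,
`ψ₃^ℓ(t) = ℓ - t` (indexed by `0, 1, 2 : Fin 3`). -/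
def psi (ℓ : ℝ) : Fin 3 → ℝ → ℝ :=
  ![fun t => ℓ / 2 - t, fun t => t - ℓ / 2, fun t => ℓ - t]

/-- An `ℓ`-periodic curve `γ : ℝ → ℝ³` is D₂-symmetric if `Rᵢ(γ(ψᵢ^ℓ(t))) = γ(t)`
for all `t ∈ ℝ` and `i = 1,2,3`. -/
def DihedralSymmetric (ℓ : ℝ) (γ : ℝ → E3) : Prop :=
  ∀ i : Fin 3, ∀ t : ℝ, Rot i (γ (psi ℓ i t)) = γ t

/-- The `ℓ`-periodic extension of the glued map built from a generating arc `α`: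
`g(t) = α(t)` on `[0, ℓ/4)`, `g(t) = Rᵢ(α(ψᵢ^ℓ(t)))` on `[iℓ/4, (i+1)ℓ/4)` for `i = 1,2,3`,
extended `ℓ`-periodically. -/
def glue (ℓ : ℝ) (α : ℝ → E3) (t : ℝ) : E3 :=
  let s := t - ℓ * (⌊t / ℓ⌋ : ℝ)
  if s < ℓ / 4 then α s
  else if s < ℓ / 2 then Rot 0 (α (psi ℓ 0 s))
  else if s < 3 * ℓ / 4 then Rot 1 (α (psi ℓ 1 s))
  else Rot 2 (α (psi ℓ 2 s))

/-- The parameter transformation `φ` (for an odd integer `b ≥ 3`). -/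
def phi (b : ℕ) (t : ℝ) : ℝ :=
  if t ≤ ((b : ℝ) - 1) / 2 then t
  else if t ≤ ((b : ℝ) + 1) / 2 then (b : ℝ) / 2 - (1 / 2) * (t - ((b : ℝ) + 1) / 2) ^ 2
  else (b : ℝ) / 2

/-- The helical part `h^ε` of the generating arc of the D₂-symmetric `(2,b)`-torus knots
(with `ρ = ε²`). -/
def hel (b : ℕ) (ε : ℝ) (t : ℝ) : E3 :=
  vec3 (ε ^ 2 * (-1 : ℝ) ^ ((b - 1) / 2) * Real.sin (π * phi b (t / ε)))
    t
    (ε ^ 2 * Real.cos (π * phi b (t / ε)))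

/-- The generating arc `α^ε` of the D₂-symmetric `(2,b)`-torus knots (for `ℓ = 1` and
`ρ = ε²`): a helical part, followed by a semicircle of radius
`r = r(ε) = (1/4 - (b+1)ε)/π`, followed by a straight segment. -/
def alphaEps (b : ℕ) (ε : ℝ) (t : ℝ) : E3 :=
  let r : ℝ := (1 / 4 - ((b : ℝ) + 1) * ε) / π
  if t ≤ ((b : ℝ) + 1) * ε / 2 then hel b ε t
  else if t ≤ 1 / 4 - ((b : ℝ) + 1) * ε / 2 then
    vec3 (ε ^ 2 + r - r * Real.cos ((t - ((b : ℝ) + 1) * ε / 2) / r))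
      (((b : ℝ) + 1) * ε / 2 + r * Real.sin ((t - ((b : ℝ) + 1) * ε / 2) / r))
      0
  else vec3 (ε ^ 2 + 2 * r) (1 / 4 - t) 0

/-- The generating arc `α₂` of the tangential pair of co-planar circles `tpc[π]`. -/
def alphaTwo (t : ℝ) : E3 :=
  (1 / (4 * π)) • vec3 (1 - Real.cos (4 * π * t)) (Real.sin (4 * π * t)) 0

open MeasureTheory Topology

/-! ### Ellipses -/

section Ellipse

variable {E : Type*} [NormedAddCommGroup E] [NormedSpace ℝ E]

/-- The ellipse centred at the origin with conjugate semi-diameters `u` and `v`. It serves for both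
circular motions in the arcs; `u` and `v` absorb the radius and need not be orthogonal. -/
def ellipse (u v : E) (θ : ℝ) : E := cos θ • u + sin θ • v

/-- The curve with velocity `w` along the axis that winds around it along `ellipse u v`, with
phase `θ`. -/
def helix (w u v : E) (θ : ℝ → ℝ) (t : ℝ) : E := t • w + ellipse u v (θ t)

lemma norm_ellipse_le (u v : E) (θ : ℝ) : ‖ellipse u v θ‖ ≤ ‖u‖ + ‖v‖ := by
  refine norm_add_le_of_le ?_ ?_ <;> rw [norm_smul]
  · exact mul_le_of_le_one_left (norm_nonneg u) (abs_cos_le_one θ)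
  · exact mul_le_of_le_one_left (norm_nonneg v) (abs_sin_le_one θ)

lemma norm_ellipse_sub_ellipse_le (u v u' v' : E) (θ η : ℝ) :
    ‖ellipse u v θ - ellipse u' v' η‖ ≤
      ‖u - u'‖ + ‖v - v'‖ + (‖u'‖ + ‖v'‖) * |θ - η| := by
  have hsplit : ellipse u v θ - ellipse u' v' η =
      ellipse (u - u') (v - v') θ + ((cos θ - cos η) • u' + (sin θ - sin η) • v') := by
    simp only [ellipse]
    module
  have hcos : ‖(cos θ - cos η) • u'‖ ≤ |θ - η| * ‖u'‖ := by
    rw [norm_smul]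
    exact mul_le_mul_of_nonneg_right (abs_cos_sub_cos_le θ η) (norm_nonneg u')
  have hsin : ‖(sin θ - sin η) • v'‖ ≤ |θ - η| * ‖v'‖ := by
    rw [norm_smul]
    exact mul_le_mul_of_nonneg_right (abs_sin_sub_sin_le θ η) (norm_nonneg v')
  rw [hsplit]
  linarith [norm_add_le_of_le (norm_ellipse_le (u - u') (v - v') θ) (norm_add_le_of_le hcos hsin)]

lemma hasDerivAt_ellipse (u v : E) (θ : ℝ) :
    HasDerivAt (ellipse u v) (ellipse v (-u) θ) θ := by
  refine (((hasDerivAt_cos θ).smul_const u).add ((hasDerivAt_sin θ).smul_const v)).congr_deriv ?_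
  simp only [ellipse]
  module

lemma hasDerivAt_ellipse_comp (u v : E) {θ : ℝ → ℝ} {θ' t : ℝ} (hθ : HasDerivAt θ θ' t) :
    HasDerivAt (fun s => ellipse u v (θ s)) (θ' • ellipse v (-u) (θ t)) t :=
  (hasDerivAt_ellipse u v (θ t)).scomp t hθ

lemma deriv_helix (w u v : E) {θ : ℝ → ℝ} {t : ℝ} (hθ : DifferentiableAt ℝ θ t) :
    deriv (helix w u v θ) t = w + deriv θ t • ellipse v (-u) (θ t) := by
  refine (((hasDerivAt_id t).smul_const w).add
    (hasDerivAt_ellipse_comp u v hθ.hasDerivAt)).deriv.trans ?_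
  rw [one_smul]

lemma deriv_deriv_helix (w u v : E) {θ : ℝ → ℝ} {t : ℝ} (hθ : ContDiffAt ℝ 2 θ t) :
    deriv (deriv (helix w u v θ)) t =
      deriv (deriv θ) t • ellipse v (-u) (θ t) - deriv θ t ^ 2 • ellipse u v (θ t) := by
  have hderiv : deriv (helix w u v θ) =ᶠ[𝓝 t]
      fun s => w + deriv θ s • ellipse v (-u) (θ s) :=
    (hθ.eventually (by decide)).mono fun s hs => deriv_helix w u v (hs.differentiableAt (by decide))
  have hθ' : DifferentiableAt ℝ (deriv θ) t :=
    (hθ.derivWithin (m := 1) (by norm_num)).differentiableAt one_ne_zero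
  have hθ1 : HasDerivAt θ (deriv θ t) t := (hθ.differentiableAt two_ne_zero).hasDerivAt
  rw [hderiv.deriv_eq]
  refine ((hθ'.hasDerivAt.smul (hasDerivAt_ellipse_comp v (-u) hθ1)).const_add w).deriv.trans ?_
  simp only [ellipse]
  module

lemma norm_deriv_helix_le (w u v : E) {θ : ℝ → ℝ} {t : ℝ} (hθ : DifferentiableAt ℝ θ t) :
    ‖deriv (helix w u v θ) t‖ ≤ ‖w‖ + |deriv θ t| * (‖u‖ + ‖v‖) := by
  rw [deriv_helix w u v hθ, add_comm ‖u‖, ← norm_neg u]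
  refine norm_add_le_of_le le_rfl ?_
  rw [norm_smul, norm_eq_abs]
  gcongr
  exact norm_ellipse_le v (-u) (θ t)

lemma norm_deriv_deriv_helix_le (w u v : E) {θ : ℝ → ℝ} {t : ℝ} (hθ : ContDiffAt ℝ 2 θ t) :
    ‖deriv (deriv (helix w u v θ)) t‖ ≤
      (|deriv (deriv θ) t| + deriv θ t ^ 2) * (‖u‖ + ‖v‖) := by
  rw [deriv_deriv_helix w u v hθ, add_mul]
  refine norm_sub_le_of_le ?_ ?_ <;> rw [norm_smul, norm_eq_abs]
  · gcongr
    simpa only [norm_neg, add_comm ‖u‖] using norm_ellipse_le v (-u) (θ t)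
  · rw [abs_sq]
    gcongr
    exact norm_ellipse_le u v (θ t)

end Ellipse

/-! ### Square integrals of functions that are large only on a small set -/

section Integral

variable {E : Type*} [NormedAddCommGroup E]

lemma norm_setIntegral_le_add_of_subset {α : Type*} [MeasurableSpace α] [NormedSpace ℝ E]
    {μ : Measure α} {s t : Set α} {f : α → E} {m M : ℝ} (ht : MeasurableSet t) (hts : t ⊆ s)
    (hs : μ s < ⊤) (hm : 0 ≤ m) (hM : 0 ≤ M) (hft : ∀ᵐ x ∂μ, x ∈ t → ‖f x‖ ≤ m)
    (hfs : ∀ᵐ x ∂μ, x ∈ s \ t → ‖f x‖ ≤ M) :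
    ‖∫ x in s, f x ∂μ‖ ≤ m * μ.real t + M * μ.real (s \ t) := by
  by_cases hf : IntegrableOn f s μ
  · rw [← integral_inter_add_sdiff ht hf, inter_eq_right.2 hts]
    exact norm_add_le_of_le
      (norm_setIntegral_le_of_norm_le_const_ae' ((measure_mono hts).trans_lt hs) hft)
      (norm_setIntegral_le_of_norm_le_const_ae' ((measure_mono sdiff_subset).trans_lt hs) hfs)
  · rw [integral_undef hf, norm_zero]
    positivity

lemma integral_norm_sq_le_add {F : ℝ → E} {p c d q m M : ℝ} (hpc : p ≤ c) (hcd : c ≤ d)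
    (hdq : d ≤ q) (hm : ∀ᵐ t, t ∈ Ioo c d → ‖F t‖ ≤ m)
    (hM : ∀ᵐ t, t ∈ Ioc p q \ Ioo c d → ‖F t‖ ≤ M) :
    ∫ t in p..q, ‖F t‖ ^ 2 ≤ m ^ 2 * (d - c) + M ^ 2 * ((q - p) - (d - c)) := by
  have hpq : p ≤ q := hpc.trans (hcd.trans hdq)
  have hsub : Ioo c d ⊆ Ioc p q := fun t ht => ⟨hpc.trans_lt ht.1, ht.2.le.trans hdq⟩
  have hsq {x k : ℝ} (hx : 0 ≤ x) (hxk : x ≤ k) : ‖x ^ 2‖ ≤ k ^ 2 := by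
    rw [norm_of_nonneg (sq_nonneg x)]
    exact pow_le_pow_left₀ hx hxk 2
  have key := norm_setIntegral_le_add_of_subset (f := fun t => ‖F t‖ ^ 2) measurableSet_Ioo hsub
    measure_Ioc_lt_top (sq_nonneg m) (sq_nonneg M)
    (hm.mono fun t h ht => hsq (norm_nonneg _) (h ht))
    (hM.mono fun t h ht => hsq (norm_nonneg _) (h ht))
  rw [measureReal_sdiff hsub measurableSet_Ioo measure_Ioc_lt_top.ne, volume_real_Ioo_of_le hcd,
    volume_real_Ioc_of_le hpq] at key
  rw [intervalIntegral.integral_of_le hpq]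
  exact (le_norm_self _).trans key

lemma sqrt_integral_norm_sq_le {F : ℝ → E} {p c d q δ m M : ℝ} (hpc : p ≤ c) (hcd : c ≤ d)
    (hdq : d ≤ q) (hpq : q - p ≤ 1) (hlen : (q - p) - (d - c) ≤ δ) (hδ : δ ≤ 1) (hm0 : 0 ≤ m)
    (hM0 : 0 ≤ M) (hm : ∀ᵐ t, t ∈ Ioo c d → ‖F t‖ ≤ m * δ)
    (hM : ∀ᵐ t, t ∉ Icc c d → ‖F t‖ ≤ M) :
    √(∫ t in p..q, ‖F t‖ ^ 2) ≤ (m + M) * √δ := by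
  have hδ0 : 0 ≤ δ := by linarith
  have hM' : ∀ᵐ t, t ∈ Ioc p q \ Ioo c d → ‖F t‖ ≤ M := by
    filter_upwards [hM, volume.ae_ne c, volume.ae_ne d] with t ht hne hne' htmem
    exact ht fun h => htmem.2 ⟨h.1.lt_of_ne' hne, h.2.lt_of_ne hne'⟩
  rw [sqrt_le_left (by positivity), mul_pow, sq_sqrt hδ0]
  calc ∫ t in p..q, ‖F t‖ ^ 2
      ≤ (m * δ) ^ 2 * (d - c) + M ^ 2 * ((q - p) - (d - c)) :=
        integral_norm_sq_le_add hpc hcd hdq hm hM'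
    _ ≤ (m * δ) ^ 2 * 1 + M ^ 2 * δ := by gcongr; linarith
    _ = m ^ 2 * (δ * δ) + M ^ 2 * δ := by ring
    _ ≤ m ^ 2 * (δ * 1) + M ^ 2 * δ := by gcongr
    _ ≤ (m + M) ^ 2 * δ := by nlinarith [mul_nonneg (mul_nonneg hm0 hM0) hδ0]

end Integral

/-! ### The semicircles -/

lemma vec3_eq_smul_add (a b c : ℝ) : vec3 a b c = a • e1 + b • e2 + c • e3 := by
  ext i
  fin_cases i <;> simp [vec3, e1, e2, e3]

lemma norm_e1 : ‖e1‖ = 1 := by simp [e1, vec3, EuclideanSpace.norm_eq, Fin.sum_univ_three]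

lemma norm_e2 : ‖e2‖ = 1 := by simp [e2, vec3, EuclideanSpace.norm_eq, Fin.sum_univ_three]

lemma norm_e3 : ‖e3‖ = 1 := by simp [e3, vec3, EuclideanSpace.norm_eq, Fin.sum_univ_three]

/-- The radius `r = (1/4 - δ)/π` of a semicircle of length `1/4 - δ`; for the arc `α^ε`,
`δ = (b+1)ε`. -/
def arcRadius (δ : ℝ) : ℝ := (1 / 4 - δ) / π

/-- The angle `(t - δ/2)/r` swept after time `t - δ/2` at unit speed on a circle of radius
`r = arcRadius δ`. -/
def arcAngle (δ t : ℝ) : ℝ := (t - δ / 2) / arcRadius δ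

/-- The circular part of the generating arcs: `δ = (b+1)ε` and `ρ = ε²` give that of `α^ε`, and
`δ = ρ = 0` gives `α₂`. -/
def semicircle (δ ρ t : ℝ) : E3 :=
  (ρ + arcRadius δ) • e1 + (δ / 2) • e2 +
    ellipse (-(arcRadius δ • e1)) (arcRadius δ • e2) (arcAngle δ t)

lemma alphaTwo_eq_semicircle : alphaTwo = semicircle 0 0 := by
  have hr : arcRadius 0 = 1 / (4 * π) := by rw [arcRadius, sub_zero, div_div]
  have hθ (t : ℝ) : arcAngle 0 t = 4 * π * t := by
    rw [arcAngle, hr]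
    field_simp
    ring
  funext t
  rw [alphaTwo, vec3_eq_smul_add, semicircle, ellipse, hθ, hr]
  module

section Comparison

variable {δ : ℝ}

lemma arcRadius_pos (hδ : δ ≤ 1 / 8) : 0 < arcRadius δ :=
  div_pos (by linarith) pi_pos

lemma abs_arcRadius_sub_le (hδ0 : 0 ≤ δ) : |arcRadius δ - arcRadius 0| ≤ δ := by
  have h : arcRadius δ - arcRadius 0 = -(δ / π) := by
    simp only [arcRadius]
    ring
  rw [h, abs_neg, abs_of_nonneg (div_nonneg hδ0 pi_pos.le)]
  exact div_le_self hδ0 (by linarith [pi_gt_three])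

lemma abs_inv_arcRadius_sub_le (hδ0 : 0 ≤ δ) (hδ : δ ≤ 1 / 8) :
    |(arcRadius δ)⁻¹ - (arcRadius 0)⁻¹| ≤ 128 * δ := by
  have hd : 0 < 1 / 4 - δ := by linarith
  have h : (arcRadius δ)⁻¹ - (arcRadius 0)⁻¹ = 4 * π * δ / (1 / 4 - δ) := by
    simp only [arcRadius, inv_div]
    rw [div_sub_div _ _ hd.ne' (by norm_num), div_eq_div_iff (by simpa using hd.ne') hd.ne']
    ring
  rw [h, abs_of_nonneg (by positivity), div_le_iff₀ hd]
  calc 4 * π * δ ≤ 4 * 4 * δ := by gcongr; exact pi_le_four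
    _ = 128 * δ * (1 / 8) := by ring
    _ ≤ 128 * δ * (1 / 4 - δ) := by gcongr; linarith

lemma abs_arcAngle_sub_le (hδ0 : 0 ≤ δ) (hδ : δ ≤ 1 / 8) {t : ℝ} (ht : t ∈ Icc (0 : ℝ) (1 / 4)) :
    |arcAngle δ t - arcAngle 0 t| ≤ 16 * δ := by
  have hd : 0 < 1 / 4 - δ := by linarith
  have h : arcAngle δ t - arcAngle 0 t = π * δ * (4 * t - 1 / 2) / (1 / 4 - δ) := by
    simp only [arcAngle, arcRadius, div_div_eq_mul_div]
    rw [div_sub_div _ _ hd.ne' (by norm_num), div_eq_div_iff (by simpa using hd.ne') hd.ne']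
    ring
  have ht' : |4 * t - 1 / 2| ≤ 1 / 2 := abs_le.2 ⟨by linarith [ht.1], by linarith [ht.2]⟩
  rw [h, abs_div, abs_of_pos hd, div_le_iff₀ hd, abs_mul, abs_of_nonneg (by positivity)]
  calc π * δ * |4 * t - 1 / 2| ≤ 4 * δ * (1 / 2) := by gcongr; exact pi_le_four
    _ = 16 * δ * (1 / 8) := by ring
    _ ≤ 16 * δ * (1 / 4 - δ) := by gcongr; linarith

lemma deriv_semicircle (hδ : δ ≤ 1 / 8) (ρ : ℝ) :
    deriv (semicircle δ ρ) = fun t => ellipse e2 e1 (arcAngle δ t) := by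
  have hr := (arcRadius_pos hδ).ne'
  funext t
  have hθ : HasDerivAt (arcAngle δ) (1 / arcRadius δ) t :=
    ((hasDerivAt_id t).sub_const (δ / 2)).div_const (arcRadius δ)
  refine ((hasDerivAt_ellipse_comp _ _ hθ).const_add _).deriv.trans ?_
  simp only [ellipse, neg_neg, smul_add, smul_smul]
  congr 2 <;> field_simp

lemma deriv_deriv_semicircle (hδ : δ ≤ 1 / 8) (ρ : ℝ) :
    deriv (deriv (semicircle δ ρ)) = fun t =>
      ellipse ((arcRadius δ)⁻¹ • e1) (-((arcRadius δ)⁻¹ • e2)) (arcAngle δ t) := by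
  funext t
  have hθ : HasDerivAt (arcAngle δ) (1 / arcRadius δ) t :=
    ((hasDerivAt_id t).sub_const (δ / 2)).div_const (arcRadius δ)
  rw [deriv_semicircle hδ, (hasDerivAt_ellipse_comp e2 e1 hθ).deriv]
  simp only [ellipse]
  module

lemma norm_semicircle_sub_semicircle_le (hδ : δ ≤ 1 / 8) (ρ s t : ℝ) :
    ‖semicircle δ ρ s - semicircle δ ρ t‖ ≤ 2 * |s - t| := by
  have hr := arcRadius_pos hδ
  have hθ : |arcAngle δ s - arcAngle δ t| = |s - t| / arcRadius δ := by
    rw [arcAngle, arcAngle, ← sub_div, sub_sub_sub_cancel_right, abs_div, abs_of_pos hr]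
  rw [semicircle, semicircle, add_sub_add_left_eq_sub]
  refine (norm_ellipse_sub_ellipse_le _ _ _ _ _ _).trans_eq ?_
  rw [hθ, norm_neg, norm_smul, norm_smul, norm_e1, norm_e2, norm_of_nonneg hr.le, sub_self,
    sub_self, norm_zero]
  field_simp
  ring

lemma norm_semicircle_sub_semicircle_zero_le (hδ0 : 0 ≤ δ) (hδ : δ ≤ 1 / 8) {ρ t : ℝ}
    (hρ : 0 ≤ ρ) (ht : t ∈ Icc (0 : ℝ) (1 / 4)) :
    ‖semicircle δ ρ t - semicircle 0 0 t‖ ≤ ρ + 40 * δ := by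
  have hr := abs_arcRadius_sub_le hδ0
  have hr0 : 0 < arcRadius 0 := arcRadius_pos (by norm_num)
  have hr1 : arcRadius 0 ≤ 1 := by
    rw [arcRadius, div_le_one pi_pos]
    linarith [pi_gt_three]
  have hsplit : semicircle δ ρ t - semicircle 0 0 t =
      (ρ • e1 + (arcRadius δ - arcRadius 0) • e1 + (δ / 2) • e2) +
        (ellipse (-(arcRadius δ • e1)) (arcRadius δ • e2) (arcAngle δ t) -
          ellipse (-(arcRadius 0 • e1)) (arcRadius 0 • e2) (arcAngle 0 t)) := by
    simp only [semicircle]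
    module
  have hbase : ‖ρ • e1 + (arcRadius δ - arcRadius 0) • e1 + (δ / 2) • e2‖ ≤ ρ + δ + δ / 2 := by
    refine norm_add_le_of_le (norm_add_le_of_le ?_ ?_) ?_
    · rw [norm_smul, norm_e1, norm_of_nonneg hρ, mul_one]
    · rwa [norm_smul, norm_e1, mul_one]
    · rw [norm_smul, norm_e2, norm_of_nonneg (by positivity), mul_one]
  have hcircle := norm_ellipse_sub_ellipse_le (-(arcRadius δ • e1)) (arcRadius δ • e2)
    (-(arcRadius 0 • e1)) (arcRadius 0 • e2) (arcAngle δ t) (arcAngle 0 t)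
  rw [← neg_sub', norm_neg, norm_neg, ← sub_smul, ← sub_smul, norm_smul, norm_smul, norm_smul,
    norm_smul, norm_e1, norm_e2, norm_of_nonneg hr0.le, norm_eq_abs] at hcircle
  have hangle : (arcRadius 0 * 1 + arcRadius 0 * 1) * |arcAngle δ t - arcAngle 0 t| ≤
      (1 * 1 + 1 * 1) * (16 * δ) := by
    gcongr
    exact abs_arcAngle_sub_le hδ0 hδ ht
  rw [hsplit]
  linarith [norm_add_le_of_le hbase hcircle]

lemma norm_deriv_semicircle_sub_le (hδ0 : 0 ≤ δ) (hδ : δ ≤ 1 / 8) (ρ : ℝ) {t : ℝ}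
    (ht : t ∈ Icc (0 : ℝ) (1 / 4)) :
    ‖deriv (semicircle δ ρ) t - deriv (semicircle 0 0) t‖ ≤ 32 * δ := by
  have h := norm_ellipse_sub_ellipse_le e2 e1 e2 e1 (arcAngle δ t) (arcAngle 0 t)
  rw [sub_self, sub_self, norm_zero, norm_e1, norm_e2] at h
  simp only [deriv_semicircle hδ, deriv_semicircle (show (0 : ℝ) ≤ 1 / 8 by norm_num)]
  linarith [abs_arcAngle_sub_le hδ0 hδ ht]

lemma inv_arcRadius_zero_le : (arcRadius 0)⁻¹ ≤ 16 := by
  rw [arcRadius, inv_div, sub_zero, div_div_eq_mul_div, div_one]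
  linarith [pi_le_four]

lemma norm_deriv_deriv_semicircle_sub_le (hδ0 : 0 ≤ δ) (hδ : δ ≤ 1 / 8) (ρ : ℝ) {t : ℝ}
    (ht : t ∈ Icc (0 : ℝ) (1 / 4)) :
    ‖deriv (deriv (semicircle δ ρ)) t - deriv (deriv (semicircle 0 0)) t‖ ≤ 768 * δ := by
  have hr := abs_inv_arcRadius_sub_le hδ0 hδ
  have hr0 : 0 < (arcRadius 0)⁻¹ := inv_pos.2 (arcRadius_pos (by norm_num))
  have h := norm_ellipse_sub_ellipse_le ((arcRadius δ)⁻¹ • e1) (-((arcRadius δ)⁻¹ • e2))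
    ((arcRadius 0)⁻¹ • e1) (-((arcRadius 0)⁻¹ • e2)) (arcAngle δ t) (arcAngle 0 t)
  rw [← neg_sub', norm_neg, norm_neg, ← sub_smul, ← sub_smul, norm_smul, norm_smul, norm_smul,
    norm_smul, norm_e1, norm_e2, norm_of_nonneg hr0.le, norm_eq_abs] at h
  have hangle : ((arcRadius 0)⁻¹ * 1 + (arcRadius 0)⁻¹ * 1) * |arcAngle δ t - arcAngle 0 t| ≤
      (16 * 1 + 16 * 1) * (16 * δ) := by
    gcongr
    · exact inv_arcRadius_zero_le
    · exact inv_arcRadius_zero_le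
    · exact abs_arcAngle_sub_le hδ0 hδ ht
  simp only [deriv_deriv_semicircle hδ,
    deriv_deriv_semicircle (show (0 : ℝ) ≤ 1 / 8 by norm_num)]
  linarith

end Comparison

lemma norm_deriv_alphaTwo_le (t : ℝ) : ‖deriv alphaTwo t‖ ≤ 2 := by
  rw [alphaTwo_eq_semicircle, deriv_semicircle (by norm_num)]
  refine (norm_ellipse_le _ _ _).trans_eq ?_
  rw [norm_e1, norm_e2]
  norm_num

lemma norm_deriv_deriv_alphaTwo_le (t : ℝ) : ‖deriv (deriv alphaTwo) t‖ ≤ 32 := by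
  have hr0 : 0 < (arcRadius 0)⁻¹ := inv_pos.2 (arcRadius_pos (by norm_num))
  rw [alphaTwo_eq_semicircle, deriv_deriv_semicircle (by norm_num)]
  refine (norm_ellipse_le _ _ _).trans ?_
  rw [norm_neg, norm_smul, norm_smul, norm_e1, norm_e2, norm_of_nonneg hr0.le]
  linarith [inv_arcRadius_zero_le]

lemma norm_alphaTwo_sub_le (s t : ℝ) : ‖alphaTwo s - alphaTwo t‖ ≤ 2 * |s - t| := by
  rw [alphaTwo_eq_semicircle]
  exact norm_semicircle_sub_semicircle_le (by norm_num) 0 s t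

lemma alphaTwo_zero : alphaTwo 0 = 0 := by
  simp [alphaTwo, vec3_eq_smul_add]

lemma alphaTwo_one_fourth : alphaTwo (1 / 4) = (2 * arcRadius 0) • e1 := by
  have hπ : 4 * π * (1 / 4) = π := by ring
  rw [alphaTwo, hπ, sin_pi, cos_pi, vec3_eq_smul_add, arcRadius]
  module

/-! ### The helical strand -/

section Phase

variable {b : ℕ} {x : ℝ}

lemma phi_eventuallyEq_id (hx : x < ((b : ℝ) - 1) / 2) : phi b =ᶠ[𝓝 x] id := by
  filter_upwards [Iio_mem_nhds hx] with y hy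
  rw [phi, if_pos (le_of_lt hy), id]

lemma phi_eventuallyEq_parabola (hx : x ∈ Ioo (((b : ℝ) - 1) / 2) (((b : ℝ) + 1) / 2)) :
    phi b =ᶠ[𝓝 x] fun y => (b : ℝ) / 2 - 1 / 2 * (y - ((b : ℝ) + 1) / 2) ^ 2 := by
  filter_upwards [Ioo_mem_nhds hx.1 hx.2] with y hy
  rw [phi, if_neg (not_le.2 hy.1), if_pos hy.2.le]

lemma deriv_parabola (a c : ℝ) :
    deriv (fun y : ℝ => c - 1 / 2 * (y - a) ^ 2) = fun y => a - y := by
  funext y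
  refine ((((hasDerivAt_id y).sub_const a).pow 2).const_mul (1 / 2 : ℝ)).const_sub c
    |>.deriv.trans ?_
  simp only [id]
  ring

lemma phi_contDiffAt_and_abs_deriv_le (hx : x < ((b : ℝ) + 1) / 2) (hne : x ≠ ((b : ℝ) - 1) / 2) :
    ContDiffAt ℝ 2 (phi b) x ∧ |deriv (phi b) x| ≤ 1 ∧ |deriv (deriv (phi b)) x| ≤ 1 := by
  rcases lt_or_gt_of_ne hne with hlt | hgt
  · have h := phi_eventuallyEq_id hlt
    refine ⟨contDiffAt_id.congr_of_eventuallyEq h, ?_, ?_⟩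
    · rw [h.deriv_eq]
      simp
    · rw [h.deriv.deriv_eq]
      simp
  · have h := phi_eventuallyEq_parabola ⟨hgt, hx⟩
    refine ⟨ContDiffAt.congr_of_eventuallyEq (by fun_prop) h, ?_, ?_⟩
    · rw [h.deriv_eq, deriv_parabola]
      exact abs_le.2 ⟨by linarith, by linarith⟩
    · rw [h.deriv.deriv_eq, deriv_parabola]
      simp

end Phase

section Helix

variable {b : ℕ} {ε t : ℝ}

lemma hel_eq_helix (b : ℕ) (ε : ℝ) :
    hel b ε = helix e2 (ε ^ 2 • e3) ((ε ^ 2 * (-1) ^ ((b - 1) / 2)) • e1)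
      (fun t => π * phi b (ε⁻¹ * t)) := by
  funext t
  rw [hel, vec3_eq_smul_add, helix, ellipse, div_eq_inv_mul]
  module

lemma norm_hel_semidiameters (b : ℕ) (ε : ℝ) :
    ‖ε ^ 2 • e3‖ + ‖(ε ^ 2 * (-1) ^ ((b - 1) / 2)) • e1‖ = 2 * ε ^ 2 := by
  rw [norm_smul, norm_smul, norm_e1, norm_e3, norm_mul, norm_pow, norm_pow, norm_neg, norm_one,
    one_pow, norm_eq_abs, sq_abs]
  ring

lemma norm_hel_le (ht : 0 ≤ t) : ‖hel b ε t‖ ≤ t + 2 * ε ^ 2 := by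
  rw [hel_eq_helix, helix, ← norm_hel_semidiameters b]
  refine norm_add_le_of_le ?_ (norm_ellipse_le _ _ _)
  rw [norm_smul, norm_e2, norm_of_nonneg ht, mul_one]

lemma deriv_phase (b : ℕ) (ε : ℝ) :
    deriv (fun t => π * phi b (ε⁻¹ * t)) = fun t => π * (ε⁻¹ * deriv (phi b) (ε⁻¹ * t)) := by
  funext t
  rw [deriv_const_mul_field, deriv_comp_mul_left, smul_eq_mul]

lemma deriv_deriv_phase (b : ℕ) (ε : ℝ) :
    deriv (deriv fun t => π * phi b (ε⁻¹ * t)) =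
      fun t => π * (ε⁻¹ * (ε⁻¹ * deriv (deriv (phi b)) (ε⁻¹ * t))) := by
  funext t
  rw [deriv_phase, deriv_const_mul_field, deriv_const_mul_field, deriv_comp_mul_left, smul_eq_mul]

lemma phase_contDiffAt_and_abs_deriv_le (hε : 0 < ε) (ht : t < ((b : ℝ) + 1) * ε / 2)
    (hne : t ≠ ((b : ℝ) - 1) * ε / 2) :
    ContDiffAt ℝ 2 (fun t => π * phi b (ε⁻¹ * t)) t ∧
      |deriv (fun t => π * phi b (ε⁻¹ * t)) t| ≤ 4 * ε⁻¹ ∧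
      |deriv (deriv fun t => π * phi b (ε⁻¹ * t)) t| ≤ 4 * (ε⁻¹ * ε⁻¹) := by
  have hx : ε⁻¹ * t < ((b : ℝ) + 1) / 2 := by
    rw [inv_mul_lt_iff₀ hε]
    linarith
  have hxne : ε⁻¹ * t ≠ ((b : ℝ) - 1) / 2 := by
    rw [Ne, inv_mul_eq_iff_eq_mul₀ hε.ne']
    contrapose! hne
    linarith
  obtain ⟨hsmooth, hd, hdd⟩ := phi_contDiffAt_and_abs_deriv_le hx hxne
  refine ⟨contDiffAt_const.mul (hsmooth.comp t (by fun_prop)), ?_, ?_⟩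
  · simp only [deriv_phase, abs_mul, abs_of_pos pi_pos, abs_of_pos (inv_pos.2 hε)]
    calc π * (ε⁻¹ * |deriv (phi b) (ε⁻¹ * t)|) ≤ 4 * (ε⁻¹ * 1) := by gcongr; exact pi_le_four
      _ = 4 * ε⁻¹ := by rw [mul_one]
  · simp only [deriv_deriv_phase, abs_mul, abs_of_pos pi_pos, abs_of_pos (inv_pos.2 hε)]
    calc π * (ε⁻¹ * (ε⁻¹ * |deriv (deriv (phi b)) (ε⁻¹ * t)|)) ≤ 4 * (ε⁻¹ * (ε⁻¹ * 1)) := by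
          gcongr
          exact pi_le_four
      _ = 4 * (ε⁻¹ * ε⁻¹) := by rw [mul_one]

lemma norm_deriv_hel_le (hε : 0 < ε) (hε1 : ε ≤ 1) (ht : t < ((b : ℝ) + 1) * ε / 2)
    (hne : t ≠ ((b : ℝ) - 1) * ε / 2) : ‖deriv (hel b ε) t‖ ≤ 9 := by
  obtain ⟨hsmooth, hd, -⟩ := phase_contDiffAt_and_abs_deriv_le hε ht hne
  rw [hel_eq_helix]
  refine (norm_deriv_helix_le _ _ _ (hsmooth.differentiableAt two_ne_zero)).trans ?_
  rw [norm_hel_semidiameters, norm_e2]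
  calc _ ≤ 1 + 4 * ε⁻¹ * (2 * ε ^ 2) := by gcongr
    _ = 1 + 8 * ε := by field_simp; ring
    _ ≤ 9 := by linarith

lemma norm_deriv_deriv_hel_le (hε : 0 < ε) (ht : t < ((b : ℝ) + 1) * ε / 2)
    (hne : t ≠ ((b : ℝ) - 1) * ε / 2) : ‖deriv (deriv (hel b ε)) t‖ ≤ 40 := by
  obtain ⟨hsmooth, hd, hdd⟩ := phase_contDiffAt_and_abs_deriv_le hε ht hne
  rw [hel_eq_helix]
  refine (norm_deriv_deriv_helix_le _ _ _ hsmooth).trans ?_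
  rw [norm_hel_semidiameters, ← sq_abs]
  calc _ ≤ (4 * (ε⁻¹ * ε⁻¹) + (4 * ε⁻¹) ^ 2) * (2 * ε ^ 2) := by gcongr
    _ = 40 := by field_simp; norm_num

end Helix

/-! ### The generating arc and its limit -/

/-- The straight part of the generating arcs: `δ = (b+1)ε` and `ρ = ε²` give that of `α^ε`. -/
def straightPart (δ ρ t : ℝ) : E3 := (ρ + 2 * arcRadius δ) • e1 + (1 / 4 - t) • e2

lemma deriv_straightPart (δ ρ : ℝ) : deriv (straightPart δ ρ) = fun _ => -e2 := by
  funext t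
  refine ((((hasDerivAt_id t).const_sub (1 / 4)).smul_const e2).const_add _).deriv.trans ?_
  rw [neg_one_smul]

lemma norm_straightPart_sub_alphaTwo_le {δ ρ t : ℝ} (hδ : 0 ≤ δ) (hρ : 0 ≤ ρ) (ht : t ≤ 1 / 4) :
    ‖straightPart δ ρ t - alphaTwo t‖ ≤ ρ + 2 * δ + 3 * (1 / 4 - t) := by
  have hsplit : straightPart δ ρ t - alphaTwo (1 / 4) =
      ρ • e1 + (2 * (arcRadius δ - arcRadius 0)) • e1 + (1 / 4 - t) • e2 := by
    rw [straightPart, alphaTwo_one_fourth]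
    module
  have hend : ‖straightPart δ ρ t - alphaTwo (1 / 4)‖ ≤ ρ + 2 * δ + (1 / 4 - t) := by
    rw [hsplit]
    refine norm_add_le_of_le (norm_add_le_of_le ?_ ?_) ?_
    · rw [norm_smul, norm_e1, norm_of_nonneg hρ, mul_one]
    · rw [norm_smul, norm_e1, mul_one, norm_mul, norm_of_nonneg zero_le_two, norm_eq_abs]
      linarith [abs_arcRadius_sub_le hδ]
    · rw [norm_smul, norm_e2, norm_of_nonneg (by linarith), mul_one]
  have hlimit := norm_alphaTwo_sub_le (1 / 4) t
  rw [abs_of_nonneg (by linarith)] at hlimit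
  linarith [norm_sub_le_norm_sub_add_norm_sub (straightPart δ ρ t) (alphaTwo (1 / 4)) (alphaTwo t)]

lemma norm_hel_sub_alphaTwo_le {b : ℕ} {ε t : ℝ} (ht : 0 ≤ t) :
    ‖hel b ε t - alphaTwo t‖ ≤ 2 * ε ^ 2 + 3 * t := by
  have hlimit := norm_alphaTwo_sub_le t 0
  rw [alphaTwo_zero, sub_zero, sub_zero, abs_of_nonneg ht] at hlimit
  linarith [norm_sub_le_of_le (norm_hel_le (b := b) (ε := ε) ht) hlimit]

section Arc

variable {b : ℕ} {ε t : ℝ}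

lemma alphaEps_eq_hel (ht : t ≤ ((b : ℝ) + 1) * ε / 2) : alphaEps b ε t = hel b ε t :=
  if_pos ht

lemma alphaEps_eq_semicircle (ht : ((b : ℝ) + 1) * ε / 2 < t)
    (ht' : t ≤ 1 / 4 - ((b : ℝ) + 1) * ε / 2) :
    alphaEps b ε t = semicircle (((b : ℝ) + 1) * ε) (ε ^ 2) t := by
  rw [alphaEps, if_neg (not_le.2 ht), if_pos ht', vec3_eq_smul_add]
  simp only [semicircle, ellipse, arcAngle, arcRadius]
  module

lemma alphaEps_eq_straightPart (hδ : ((b : ℝ) + 1) * ε ≤ 1 / 4)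
    (ht : 1 / 4 - ((b : ℝ) + 1) * ε / 2 < t) :
    alphaEps b ε t = straightPart (((b : ℝ) + 1) * ε) (ε ^ 2) t := by
  rw [alphaEps, if_neg (by linarith), if_neg (not_le.2 ht), vec3_eq_smul_add, straightPart,
    arcRadius]
  module

lemma alphaEps_eventuallyEq_hel (ht : t < ((b : ℝ) + 1) * ε / 2) :
    alphaEps b ε =ᶠ[𝓝 t] hel b ε := by
  filter_upwards [Iio_mem_nhds ht] with s hs using alphaEps_eq_hel (le_of_lt hs)

lemma alphaEps_eventuallyEq_semicircle
    (ht : t ∈ Ioo (((b : ℝ) + 1) * ε / 2) (1 / 4 - ((b : ℝ) + 1) * ε / 2)) :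
    alphaEps b ε =ᶠ[𝓝 t] semicircle (((b : ℝ) + 1) * ε) (ε ^ 2) := by
  filter_upwards [Ioo_mem_nhds ht.1 ht.2] with s hs using alphaEps_eq_semicircle hs.1 hs.2.le

lemma alphaEps_eventuallyEq_straightPart (hδ : ((b : ℝ) + 1) * ε ≤ 1 / 4)
    (ht : 1 / 4 - ((b : ℝ) + 1) * ε / 2 < t) :
    alphaEps b ε =ᶠ[𝓝 t] straightPart (((b : ℝ) + 1) * ε) (ε ^ 2) := by
  filter_upwards [Ioi_mem_nhds ht] with s hs using alphaEps_eq_straightPart hδ hs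

lemma le_natCast_add_one_mul (b : ℕ) (hε : 0 ≤ ε) : ε ≤ ((b : ℝ) + 1) * ε :=
  le_mul_of_one_le_left hε (by simp)

lemma norm_deriv_alphaEps_sub_le_of_mem_Ioo (hε : 0 ≤ ε) (hδ : ((b : ℝ) + 1) * ε ≤ 1 / 8)
    (ht : t ∈ Ioo (((b : ℝ) + 1) * ε / 2) (1 / 4 - ((b : ℝ) + 1) * ε / 2)) :
    ‖deriv (alphaEps b ε) t - deriv alphaTwo t‖ ≤ 32 * (((b : ℝ) + 1) * ε) ∧
      ‖deriv (deriv (alphaEps b ε)) t - deriv (deriv alphaTwo) t‖ ≤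
        768 * (((b : ℝ) + 1) * ε) := by
  have h := alphaEps_eventuallyEq_semicircle ht
  have hδ0 : 0 ≤ ((b : ℝ) + 1) * ε := by positivity
  have ht' : t ∈ Icc (0 : ℝ) (1 / 4) := ⟨by linarith [ht.1], by linarith [ht.2]⟩
  rw [h.deriv_eq, h.deriv.deriv_eq, alphaTwo_eq_semicircle]
  exact ⟨norm_deriv_semicircle_sub_le hδ0 hδ _ ht', norm_deriv_deriv_semicircle_sub_le hδ0 hδ _ ht'⟩

lemma norm_deriv_alphaEps_le (hε : 0 < ε) (hδ : ((b : ℝ) + 1) * ε ≤ 1 / 4)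
    (ht : t ∉ Icc (((b : ℝ) + 1) * ε / 2) (1 / 4 - ((b : ℝ) + 1) * ε / 2))
    (hne : t ≠ ((b : ℝ) - 1) * ε / 2) :
    ‖deriv (alphaEps b ε) t‖ ≤ 9 ∧ ‖deriv (deriv (alphaEps b ε)) t‖ ≤ 40 := by
  rcases lt_or_ge t (((b : ℝ) + 1) * ε / 2) with hlt | hge
  · have h := alphaEps_eventuallyEq_hel hlt
    have hε1 : ε ≤ 1 := by linarith [le_natCast_add_one_mul b hε.le]
    rw [h.deriv_eq, h.deriv.deriv_eq]
    exact ⟨norm_deriv_hel_le hε hε1 hlt hne, norm_deriv_deriv_hel_le hε hlt hne⟩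
  · have h := alphaEps_eventuallyEq_straightPart hδ (not_le.1 fun hle => ht ⟨hge, hle⟩)
    rw [h.deriv_eq, h.deriv.deriv_eq, deriv_straightPart]
    simp only [norm_neg, norm_e2, deriv_const', norm_zero]
    norm_num

lemma norm_deriv_alphaEps_sub_le (hε : 0 < ε) (hδ : ((b : ℝ) + 1) * ε ≤ 1 / 4)
    (ht : t ∉ Icc (((b : ℝ) + 1) * ε / 2) (1 / 4 - ((b : ℝ) + 1) * ε / 2))
    (hne : t ≠ ((b : ℝ) - 1) * ε / 2) :
    ‖deriv (alphaEps b ε) t - deriv alphaTwo t‖ ≤ 11 ∧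
      ‖deriv (deriv (alphaEps b ε)) t - deriv (deriv alphaTwo) t‖ ≤ 72 := by
  obtain ⟨hd, hdd⟩ := norm_deriv_alphaEps_le hε hδ ht hne
  exact ⟨(norm_sub_le_of_le hd (norm_deriv_alphaTwo_le t)).trans_eq (by norm_num),
    (norm_sub_le_of_le hdd (norm_deriv_deriv_alphaTwo_le t)).trans_eq (by norm_num)⟩

lemma norm_alphaEps_sub_alphaTwo_le (hε : 0 ≤ ε) (hδ : ((b : ℝ) + 1) * ε ≤ 1 / 8)
    (ht : t ∈ Icc (0 : ℝ) (1 / 4)) :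
    ‖alphaEps b ε t - alphaTwo t‖ ≤ 41 * (((b : ℝ) + 1) * ε) := by
  have hεδ := le_natCast_add_one_mul b hε
  have hε2 : ε ^ 2 ≤ ε := pow_le_of_le_one hε (by linarith) two_ne_zero
  rcases le_or_gt t (((b : ℝ) + 1) * ε / 2) with h1 | h1
  · rw [alphaEps_eq_hel h1]
    linarith [norm_hel_sub_alphaTwo_le (b := b) (ε := ε) ht.1]
  rcases le_or_gt t (1 / 4 - ((b : ℝ) + 1) * ε / 2) with h2 | h2
  · rw [alphaEps_eq_semicircle h1 h2, alphaTwo_eq_semicircle]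
    linarith [norm_semicircle_sub_semicircle_zero_le (hε.trans hεδ) hδ (sq_nonneg ε) ht]
  · rw [alphaEps_eq_straightPart (by linarith) h2]
    linarith [norm_straightPart_sub_alphaTwo_le (hε.trans hεδ) (sq_nonneg ε) ht.2]

end Arc

theorem generating_arcs_W22_convergence_general (b : ℕ) {ε : ℝ} (hε : 0 < ε)
    (hδ : ((b : ℝ) + 1) * ε ≤ 1 / 8) :
    √(∫ t in (0 : ℝ)..(1 / 4), ‖deriv (deriv (alphaEps b ε)) t - deriv (deriv alphaTwo) t‖ ^ 2) ≤
        840 * √(((b : ℝ) + 1) * ε) ∧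
      √(∫ t in (0 : ℝ)..(1 / 4), ‖deriv (alphaEps b ε) t - deriv alphaTwo t‖ ^ 2) ≤
        840 * √(((b : ℝ) + 1) * ε) ∧
      ∀ t ∈ Icc (0 : ℝ) (1 / 4), ‖alphaEps b ε t - alphaTwo t‖ ≤ 840 * √(((b : ℝ) + 1) * ε) := by
  have hδ0 : 0 ≤ ((b : ℝ) + 1) * ε := by positivity
  have hends : ∀ᵐ t, t ∉ Icc (((b : ℝ) + 1) * ε / 2) (1 / 4 - ((b : ℝ) + 1) * ε / 2) →
      ‖deriv (alphaEps b ε) t - deriv alphaTwo t‖ ≤ 11 ∧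
        ‖deriv (deriv (alphaEps b ε)) t - deriv (deriv alphaTwo) t‖ ≤ 72 :=
    (volume.ae_ne (((b : ℝ) - 1) * ε / 2)).mono fun t hne ht =>
      norm_deriv_alphaEps_sub_le hε (by linarith) ht hne
  have hL2 {F : ℝ → E3}
      (hmid : ∀ t ∈ Ioo (((b : ℝ) + 1) * ε / 2) (1 / 4 - ((b : ℝ) + 1) * ε / 2),
        ‖F t‖ ≤ 768 * (((b : ℝ) + 1) * ε))
      (hends : ∀ᵐ t, t ∉ Icc (((b : ℝ) + 1) * ε / 2) (1 / 4 - ((b : ℝ) + 1) * ε / 2) →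
        ‖F t‖ ≤ 72) :
      √(∫ t in (0 : ℝ)..(1 / 4), ‖F t‖ ^ 2) ≤ 840 * √(((b : ℝ) + 1) * ε) :=
    (sqrt_integral_norm_sq_le (by linarith) (by linarith) (by linarith) (by norm_num)
      (by linarith) (by linarith) (by norm_num) (by norm_num) (ae_of_all _ hmid) hends).trans_eq
      (by norm_num)
  refine ⟨hL2 (fun t ht => (norm_deriv_alphaEps_sub_le_of_mem_Ioo hε.le hδ ht).2)
      (hends.mono fun t h ht => (h ht).2),
    hL2 (fun t ht => (norm_deriv_alphaEps_sub_le_of_mem_Ioo hε.le hδ ht).1.trans (by linarith))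
      (hends.mono fun t h ht => (h ht).1.trans (by norm_num)), fun t ht => ?_⟩
  have hsqrt : ((b : ℝ) + 1) * ε ≤ √(((b : ℝ) + 1) * ε) :=
    le_sqrt_of_sq_le (pow_le_of_le_one hδ0 (by linarith) two_ne_zero)
  linarith [norm_alphaEps_sub_alphaTwo_le hε.le hδ ht]

/-- **Strong `W^{2,2}`-convergence of the generating arcs.** For odd
`b ≥ 3` there is a constant `C ≥ 1`, independent of `ε`, such that for all
`ε ∈ (0, 1/(8(b+1)))` the arc `α^ε` is `C√ε`-close to `α₂` in the `L²`-norms of the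
second and first derivatives and in the sup-norm on `[0, 1/4]`; in particular
`α^ε → α₂` in `W^{2,2}` as `ε → 0`. -/
theorem generating_arcs_W22_convergence (b : ℕ) (hb : Odd b) (hb3 : 3 ≤ b) :
    ∃ C : ℝ, 1 ≤ C ∧
      ∀ ε : ℝ, 0 < ε → ε < 1 / (8 * ((b : ℝ) + 1)) →
        Real.sqrt (∫ t in (0 : ℝ)..(1 / 4),
            ‖deriv (deriv (alphaEps b ε)) t - deriv (deriv alphaTwo) t‖ ^ 2) ≤
          C * Real.sqrt ε ∧
        Real.sqrt (∫ t in (0 : ℝ)..(1 / 4),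
            ‖deriv (alphaEps b ε) t - deriv alphaTwo t‖ ^ 2) ≤
          C * Real.sqrt ε ∧
        ∀ t ∈ Icc (0 : ℝ) (1 / 4), ‖alphaEps b ε t - alphaTwo t‖ ≤ C * Real.sqrt ε := by
  have hb1 : 0 < (b : ℝ) + 1 := by positivity
  refine ⟨840 * √((b : ℝ) + 1), ?_, fun ε hε hεb => ?_⟩
  · linarith [one_le_sqrt.2 (show 1 ≤ (b : ℝ) + 1 by simp)]
  · rw [lt_div_iff₀ (by positivity)] at hεb
    simpa only [sqrt_mul hb1.le, mul_assoc] using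
      generating_arcs_W22_convergence_general b hε (by linarith)
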